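/- arXiv:1907.04384 — 9 statements merged into one kernel-verified Lean document; each statement's English description precedes it below -/
import Mathlib

section
/- Let D be an integral domain that is not a field. Suppose that (1) every nonzero nonunit of D is contained in some homogeneous ideal of D, and (2) whenever a maximal ideal M of D is contained in the union of a family (M_α) of maximal ideals of D, then M = M_α for some α. Then D is potent, i.e., every maximal ideal of D contains a homogeneous ideal. -/
/-- A (d-)homogeneous ideal: a nonzero proper finitely generated ideal contained in
exactly one maximal ideal. -/
def IsHomogIdeal {D : Type*} [CommRing D] (I : Ideal D) : Prop :=
  I ≠ ⊥ ∧ I ≠ ⊤ ∧ I.FG ∧ ∃! M : Ideal D, M.IsMaximal ∧ I ≤ M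

/-!
The maximal ideals containing a homogeneous ideal cover every nonzero nonunit by (1), hence cover
any given maximal ideal `M`; by (2) `M` is then one of them.
-/

theorem coe_subset_biUnion_of_forall_ne_zero_nonunit_mem {R : Type*} [Semiring R] {J : Ideal R}
    (hbot : J ≠ ⊥) (htop : J ≠ ⊤) {S : Set (Ideal R)}
    (hS : ∀ x : R, x ≠ 0 → ¬ IsUnit x → ∃ N ∈ S, x ∈ N) :
    (J : Set R) ⊆ ⋃ N ∈ S, (N : Set R) := by
  have exists_mem_of_ne_zero : ∀ x ∈ J, x ≠ 0 → ∃ N ∈ S, x ∈ N := fun x hxJ hx ↦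
    hS x hx fun hunit ↦ htop (J.eq_top_of_isUnit_mem hxJ hunit)
  intro x hxJ
  rw [Set.mem_iUnion₂]
  simp only [SetLike.mem_coe, exists_prop]
  rcases eq_or_ne x 0 with rfl | hx
  · -- `S` is nonempty because `J` has a nonzero element.
    obtain ⟨y, hyJ, hy⟩ := Submodule.exists_mem_ne_zero_of_ne_bot hbot
    obtain ⟨N, hNS, -⟩ := exists_mem_of_ne_zero y hyJ hy
    exact ⟨N, hNS, N.zero_mem⟩
  · exact exists_mem_of_ne_zero x hxJ hx

theorem stmt_0_general {R : Type*} [CommSemiring R] (hnf : ¬ IsField R) {A : Set (Ideal R)}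
    (hA : ∀ x : R, x ≠ 0 → ¬ IsUnit x → ∃ I ∈ A, I ≠ ⊤ ∧ x ∈ I)
    (hcover : ∀ M : Ideal R, M.IsMaximal → ∀ S : Set (Ideal R),
      (∀ N ∈ S, N.IsMaximal) → (M : Set R) ⊆ ⋃ N ∈ S, (N : Set R) → M ∈ S)
    (M : Ideal R) (hM : M.IsMaximal) : ∃ I ∈ A, I ≤ M := by
  let S : Set (Ideal R) := {N | N.IsMaximal ∧ ∃ I ∈ A, I ≤ N}
  have exists_mem_S : ∀ x : R, x ≠ 0 → ¬ IsUnit x → ∃ N ∈ S, x ∈ N := by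
    intro x hx hunit
    obtain ⟨I, hIA, hI, hxI⟩ := hA x hx hunit
    obtain ⟨N, hN, hIN⟩ := I.exists_le_maximal hI
    exact ⟨N, ⟨hN, I, hIA, hIN⟩, hIN hxI⟩
  have : Nontrivial R :=
    (Submodule.nontrivial_iff R).mp (nontrivial_of_ne M ⊤ hM.ne_top)
  have hbot : M ≠ ⊥ := Ring.ne_bot_of_isMaximal_of_not_isField hM hnf
  have hMS : M ∈ S := hcover M hM S (fun _ hN ↦ hN.1)
    (coe_subset_biUnion_of_forall_ne_zero_nonunit_mem hbot hM.ne_top exists_mem_S)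
  exact hMS.2

theorem stmt_0 {D : Type*} [CommRing D] [IsDomain D] (hnf : ¬ IsField D)
    (h1 : ∀ x : D, x ≠ 0 → ¬ IsUnit x → ∃ I : Ideal D, IsHomogIdeal I ∧ x ∈ I)
    (h2 : ∀ M : Ideal D, M.IsMaximal → ∀ S : Set (Ideal D),
      (∀ N ∈ S, N.IsMaximal) → (M : Set D) ⊆ ⋃ N ∈ S, (N : Set D) → M ∈ S) :
    ∀ M : Ideal D, M.IsMaximal → ∃ I : Ideal D, IsHomogIdeal I ∧ I ≤ M :=
  stmt_0_general (A := {I | IsHomogIdeal I}) hnf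
    (fun x hx hunit ↦ (h1 x hx hunit).imp fun _ ⟨hI, hxI⟩ ↦ ⟨hI, hI.2.1, hxI⟩) h2
end

section
/- Let D be an integral domain. If D is potent (every maximal ideal of D contains a homogeneous ideal), then every nonzero nonunit x of D is contained in some homogeneous ideal of D; indeed, if I is a homogeneous ideal contained in a maximal ideal containing x, then (I + xD) is a homogeneous ideal containing x. -/
section CommRing

variable {D : Type*} [CommRing D] {I J M : Ideal D}

theorem IsHomogIdeal.of_le (hI : IsHomogIdeal I) (hIJ : I ≤ J) (hJ_fg : J.FG) (hJ : J ≠ ⊤) :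
    IsHomogIdeal J := by
  obtain ⟨hI_ne_bot, -, -, hI_unique⟩ := hI
  obtain ⟨M, hM, hJM⟩ := J.exists_le_maximal hJ
  refine ⟨ne_bot_of_le_ne_bot hI_ne_bot hIJ, hJ, hJ_fg, M, ⟨hM, hJM⟩, ?_⟩
  rintro N ⟨hN, hJN⟩
  exact hI_unique.unique ⟨hN, hIJ.trans hJN⟩ ⟨hM, hIJ.trans hJM⟩

theorem IsHomogIdeal.sup_of_le (hI : IsHomogIdeal I) (hJ_fg : J.FG) (hM : M ≠ ⊤)
    (hIM : I ≤ M) (hJM : J ≤ M) : IsHomogIdeal (I ⊔ J) :=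
  hI.of_le le_sup_left (Submodule.FG.sup hI.2.2.1 hJ_fg)
    (ne_top_of_le_ne_top hM (sup_le hIM hJM))

theorem exists_isHomogIdeal_ge_of_fg
    (hpot : ∀ M : Ideal D, M.IsMaximal → ∃ I : Ideal D, IsHomogIdeal I ∧ I ≤ M)
    (hJ_fg : J.FG) (hJ : J ≠ ⊤) : ∃ H : Ideal D, IsHomogIdeal H ∧ J ≤ H := by
  obtain ⟨M, hM, hJM⟩ := J.exists_le_maximal hJ
  obtain ⟨I, hI, hIM⟩ := hpot M hM
  exact ⟨I ⊔ J, hI.sup_of_le hJ_fg hM.ne_top hIM hJM, le_sup_right⟩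

theorem stmt_1_general
    (hpot : ∀ M : Ideal D, M.IsMaximal → ∃ I : Ideal D, IsHomogIdeal I ∧ I ≤ M) :
    (∀ x : D, ¬ IsUnit x → ∃ J : Ideal D, IsHomogIdeal J ∧ x ∈ J) ∧
    (∀ x : D, ∀ M : Ideal D, M.IsMaximal → x ∈ M →
      ∀ I : Ideal D, IsHomogIdeal I → I ≤ M →
        IsHomogIdeal (I + Ideal.span {x}) ∧ x ∈ I + Ideal.span {x}) := by
  have span_fg (x : D) : (Ideal.span {x}).FG := Submodule.fg_span_singleton x
  constructor
  · intro x hx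
    have span_ne_top : Ideal.span {x} ≠ ⊤ := mt Ideal.span_singleton_eq_top.mp hx
    obtain ⟨J, hJ, hxJ⟩ := exists_isHomogIdeal_ge_of_fg hpot (span_fg x) span_ne_top
    exact ⟨J, hJ, (Ideal.span_singleton_le_iff_mem J).mp hxJ⟩
  · intro x M hM hxM I hI hIM
    have span_le : Ideal.span {x} ≤ M := (Ideal.span_singleton_le_iff_mem M).mpr hxM
    exact ⟨hI.sup_of_le (span_fg x) hM.ne_top hIM span_le,
      Ideal.mem_sup_right (Ideal.mem_span_singleton_self x)⟩

end CommRing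

theorem stmt_1 {D : Type*} [CommRing D] [IsDomain D]
    (hpot : ∀ M : Ideal D, M.IsMaximal → ∃ I : Ideal D, IsHomogIdeal I ∧ I ≤ M) :
    (∀ x : D, x ≠ 0 → ¬ IsUnit x → ∃ J : Ideal D, IsHomogIdeal J ∧ x ∈ J) ∧
    (∀ x : D, x ≠ 0 → ¬ IsUnit x → ∀ M : Ideal D, M.IsMaximal → x ∈ M →
      ∀ I : Ideal D, IsHomogIdeal I → I ≤ M →
        IsHomogIdeal (I + Ideal.span {x}) ∧ x ∈ I + Ideal.span {x}) := by
  obtain ⟨exists_mem, add_span⟩ := stmt_1_general hpot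
  exact ⟨fun x _ => exists_mem x, fun x _ _ => add_span x⟩
end

section
/- Let D be an integral domain that is not a field and which has finite character, i.e., every nonzero nonunit of D is contained in at most finitely many maximal ideals of D. Then D is potent: every maximal ideal of D contains a homogeneous ideal. -/
/-!
Let `x ≠ 0` lie in the maximal ideal `M` and in only finitely many other maximal ideals. By prime
avoidance `M` has an element `y` outside all of those, and `M` is then the only maximal ideal
containing both `x` and `y`.
-/

section CommRing

variable {R : Type*} [CommRing R]

theorem exists_mem_forall_notMem_of_forall_not_le {I : Ideal R} {S : Set (Ideal R)}
    (hS : S.Finite) (hprime : ∀ P ∈ S, P.IsPrime) (hI : ∀ P ∈ S, ¬ I ≤ P) :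
    ∃ y ∈ I, ∀ P ∈ S, y ∉ P := by
  have hnot : ¬ (I : Set R) ⊆ ⋃ P ∈ S, P := by
    rw [Ideal.subset_union_prime_finite hS ⊥ ⊥ fun P hP _ _ => hprime P hP]
    rintro ⟨P, hP, hIP⟩
    exact hI P hP hIP
  simpa [Set.not_subset] using hnot

theorem exists_isHomogIdeal_span_pair_le {M : Ideal R} (hM : M.IsMaximal) {x : R} (hxM : x ∈ M)
    (hx0 : x ≠ 0) (hfin : {N : Ideal R | N.IsMaximal ∧ x ∈ N}.Finite) :
    ∃ y, IsHomogIdeal (Ideal.span {x, y}) ∧ Ideal.span {x, y} ≤ M := by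
  obtain ⟨y, hyM, hy⟩ : ∃ y ∈ M, ∀ N ∈ {N : Ideal R | N.IsMaximal ∧ x ∈ N} \ {M}, y ∉ N :=
    exists_mem_forall_notMem_of_forall_not_le hfin.sdiff (fun N hN => hN.1.1.isPrime)
      fun N hN hMN => hN.2 (hM.eq_of_le hN.1.1.ne_top hMN).symm
  have hle : Ideal.span {x, y} ≤ M := Ideal.span_le.mpr (Set.pair_subset hxM hyM)
  have hunique : ∀ N : Ideal R, N.IsMaximal ∧ Ideal.span {x, y} ≤ N → N = M := by
    rintro N ⟨hN, hIN⟩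
    obtain ⟨hxN, hyN⟩ := Set.pair_subset_iff.mp (Ideal.span_le.mp hIN)
    by_contra hne
    exact hy N ⟨⟨hN, hxN⟩, hne⟩ hyN
  have hne_bot : Ideal.span {x, y} ≠ ⊥ := fun h =>
    hx0 (Ideal.span_eq_bot.mp h x (Set.mem_insert x {y}))
  exact ⟨y, ⟨hne_bot, ne_top_of_le_ne_top hM.ne_top hle, Submodule.fg_span (Set.toFinite _),
    M, ⟨hM, hle⟩, hunique⟩, hle⟩

theorem stmt_2_general (hnf : ¬ IsField R)
    (hfc : ∀ x : R, x ≠ 0 → ¬ IsUnit x → {M : Ideal R | M.IsMaximal ∧ x ∈ M}.Finite) :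
    ∀ M : Ideal R, M.IsMaximal → ∃ I : Ideal R, IsHomogIdeal I ∧ I ≤ M := by
  intro M hM
  have : Nontrivial R := (Submodule.nontrivial_iff R).mp ⟨M, ⊤, hM.ne_top⟩
  obtain ⟨x, hxM, hx0⟩ :=
    Submodule.exists_mem_ne_zero_of_ne_bot (Ring.ne_bot_of_isMaximal_of_not_isField hM hnf)
  have hxu : ¬ IsUnit x := fun hu => hM.ne_top (M.eq_top_of_isUnit_mem hxM hu)
  obtain ⟨y, hI⟩ := exists_isHomogIdeal_span_pair_le hM hxM hx0 (hfc x hx0 hxu)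
  exact ⟨Ideal.span {x, y}, hI⟩

end CommRing

theorem stmt_2 {D : Type*} [CommRing D] [IsDomain D] (hnf : ¬ IsField D)
    (hfc : ∀ x : D, x ≠ 0 → ¬ IsUnit x → {M : Ideal D | M.IsMaximal ∧ x ∈ M}.Finite) :
    ∀ M : Ideal D, M.IsMaximal → ∃ I : Ideal D, IsHomogIdeal I ∧ I ≤ M :=
  stmt_2_general hnf hfc
end

section
/- Let D be an integral domain and let I be a nonzero proper finitely generated ideal of D. Then I is homogeneous (contained in exactly one maximal ideal) if and only if for every pair X, Y of proper finitely generated ideals of D with I ⊆ X and I ⊆ Y, the ideal X + Y is proper (X + Y ≠ D). -/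
section Semiring

variable {R : Type*} [Semiring R] {I X Y : Ideal R}

theorem le_of_forall_isMaximal_eq {M : Ideal R}
    (hM : ∀ N : Ideal R, N.IsMaximal ∧ I ≤ N → N = M) (hX : X ≠ ⊤) (hIX : I ≤ X) :
    X ≤ M := by
  obtain ⟨N, hN, hXN⟩ := X.exists_le_maximal hX
  exact hXN.trans_eq (hM N ⟨hN, hIX.trans hXN⟩)

theorem sup_ne_top_of_existsUnique_isMaximal (hI : ∃! M : Ideal R, M.IsMaximal ∧ I ≤ M)
    (hX : X ≠ ⊤) (hY : Y ≠ ⊤) (hIX : I ≤ X) (hIY : I ≤ Y) : X ⊔ Y ≠ ⊤ := by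
  obtain ⟨M, ⟨hM, -⟩, hunique⟩ := hI
  have hXYM : X ⊔ Y ≤ M :=
    sup_le (le_of_forall_isMaximal_eq hunique hX hIX) (le_of_forall_isMaximal_eq hunique hY hIY)
  exact ne_top_of_le_ne_top hM.ne_top hXYM

-- A relation `a + b = 1` with `a ∈ X` and `b ∈ Y` involves only one element of each ideal,
-- so it survives in `I + (a)` and `I + (b)`.
theorem exists_fg_between_sup_eq_top (hI : I.FG) (hIX : I ≤ X) (hIY : I ≤ Y)
    (hXY : X ⊔ Y = ⊤) :
    ∃ X' Y' : Ideal R, X'.FG ∧ Y'.FG ∧ I ≤ X' ∧ I ≤ Y' ∧ X' ≤ X ∧ Y' ≤ Y ∧ X' ⊔ Y' = ⊤ := by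
  obtain ⟨a, ha, b, hb, hab⟩ := Submodule.mem_sup.mp ((Ideal.eq_top_iff_one _).mp hXY)
  refine ⟨I ⊔ Ideal.span {a}, I ⊔ Ideal.span {b},
    Submodule.FG.sup hI (Submodule.fg_span_singleton a),
    Submodule.FG.sup hI (Submodule.fg_span_singleton b),
    le_sup_left, le_sup_left,
    sup_le hIX ((Ideal.span_singleton_le_iff_mem X).mpr ha),
    sup_le hIY ((Ideal.span_singleton_le_iff_mem Y).mpr hb), ?_⟩
  rw [Ideal.eq_top_iff_one, ← hab]
  exact Submodule.add_mem_sup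
    (Ideal.mem_sup_right (Ideal.mem_span_singleton_self a))
    (Ideal.mem_sup_right (Ideal.mem_span_singleton_self b))

theorem existsUnique_isMaximal_of_forall_fg_sup_ne_top (hI : I ≠ ⊤) (hIfg : I.FG)
    (h : ∀ X Y : Ideal R, X ≠ ⊤ → X.FG → Y ≠ ⊤ → Y.FG → I ≤ X → I ≤ Y → X ⊔ Y ≠ ⊤) :
    ∃! M : Ideal R, M.IsMaximal ∧ I ≤ M := by
  obtain ⟨M, hM, hIM⟩ := I.exists_le_maximal hI
  refine ⟨M, ⟨hM, hIM⟩, ?_⟩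
  rintro N ⟨hN, hIN⟩
  by_contra hne
  obtain ⟨X, Y, hXfg, hYfg, hIX, hIY, hXN, hYM, hXY⟩ :=
    exists_fg_between_sup_eq_top hIfg hIN hIM (hN.coprime_of_ne hM hne)
  have hX : X ≠ ⊤ := ne_top_of_le_ne_top hN.ne_top hXN
  have hY : Y ≠ ⊤ := ne_top_of_le_ne_top hM.ne_top hYM
  exact h X Y hX hXfg hY hYfg hIX hIY hXY

end Semiring

theorem stmt_3_general {D : Type*} [CommRing D] (I : Ideal D)
    (hI0 : I ≠ ⊥) (hIt : I ≠ ⊤) (hIfg : I.FG) :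
    IsHomogIdeal I ↔
      ∀ X Y : Ideal D, X ≠ ⊤ → X.FG → Y ≠ ⊤ → Y.FG → I ≤ X → I ≤ Y → X + Y ≠ ⊤ := by
  constructor
  · rintro ⟨-, -, -, hunique⟩ X Y hX - hY - hIX hIY
    exact sup_ne_top_of_existsUnique_isMaximal hunique hX hY hIX hIY
  · intro h
    exact ⟨hI0, hIt, hIfg, existsUnique_isMaximal_of_forall_fg_sup_ne_top hIt hIfg h⟩

theorem stmt_3 {D : Type*} [CommRing D] [IsDomain D] (I : Ideal D)
    (hI0 : I ≠ ⊥) (hIt : I ≠ ⊤) (hIfg : I.FG) :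
    IsHomogIdeal I ↔
      ∀ X Y : Ideal D, X ≠ ⊤ → X.FG → Y ≠ ⊤ → Y.FG → I ≤ X → I ≤ Y → X + Y ≠ ⊤ :=
  stmt_3_general I hI0 hIt hIfg
end

section
/- Let D be an integral domain. Then D has finite character (every nonzero nonunit of D lies in at most finitely many maximal ideals) if and only if every nonzero proper finitely generated ideal of D is contained in at most finitely many mutually comaximal proper finitely generated ideals; that is, if and only if for every nonzero proper finitely generated ideal A of D, every set of pairwise comaximal proper finitely generated ideals, each containing A, is finite. -/
/-!
Call a finitely generated ideal homogeneous at `M` if `M` is the only maximal ideal above it. Ideals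
homogeneous at distinct maximal ideals are comaximal, so if `A` lies in only finitely many mutually
comaximal proper finitely generated ideals, then only finitely many maximal ideals carry a
homogeneous ideal above `A`. A maximal ideal `M ⊇ A` outside this finite set would contain an `m`
avoiding all its members; but `A + (m)` lies below some homogeneous ideal, because otherwise every
proper finitely generated ideal above it would split into two comaximal ones, and splitting
repeatedly would yield an infinite comaximal family.
-/

section Order

variable {α : Type*} [PartialOrder α] [OrderTop α]

theorem exists_seq_pairwise_codisjoint {p : α → Prop}
    (split : ∀ a, p a → ∃ b c, p b ∧ p c ∧ a ≤ b ∧ a ≤ c ∧ Codisjoint b c) {a : α} (ha : p a) :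
    ∃ s : ℕ → α, (∀ n, p (s n)) ∧ Pairwise fun m n ↦ Codisjoint (s m) (s n) := by
  have : Nonempty α := ⟨a⟩
  choose! b c hb hc le_b le_c hbc using split
  -- Always split the second half again: the first halves are then pairwise codisjoint.
  let t : ℕ → α := fun n ↦ c^[n] a
  have t_succ (n : ℕ) : t (n + 1) = c (t n) := Function.iterate_succ_apply' c n a
  have ht (n : ℕ) : p (t n) := by
    induction n with
    | zero => exact ha
    | succ n ih => exact t_succ n ▸ hc _ ih
  have t_mono : Monotone t := monotone_nat_of_le_succ fun n ↦ t_succ n ▸ le_c _ (ht n)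
  have codisjoint_of_lt {m n : ℕ} (hmn : m < n) : Codisjoint (b (t m)) (b (t n)) := by
    refine (hbc _ (ht m)).mono_right ?_
    calc c (t m) = t (m + 1) := (t_succ m).symm
      _ ≤ t n := t_mono hmn
      _ ≤ b (t n) := le_b _ (ht n)
  refine ⟨fun n ↦ b (t n), fun n ↦ hb _ (ht n), fun m n hmn ↦ ?_⟩
  rcases hmn.lt_or_gt with hlt | hgt
  · exact codisjoint_of_lt hlt
  · exact (codisjoint_of_lt hgt).symm

theorem finite_of_pairwise_codisjoint_of_finite_coatoms [IsCoatomic α] {S : Set α} {a : α}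
    (hS : S.Pairwise Codisjoint) (ne_top : ∀ b ∈ S, b ≠ ⊤) (le : ∀ b ∈ S, a ≤ b)
    (hfin : {m | IsCoatom m ∧ a ≤ m}.Finite) : S.Finite := by
  have exists_coatom (b : α) (hb : b ∈ S) : ∃ m, IsCoatom m ∧ b ≤ m :=
    (eq_top_or_exists_le_coatom b).resolve_left (ne_top b hb)
  choose! f hf le_f using exists_coatom
  have f_mapsTo : Set.MapsTo f S {m | IsCoatom m ∧ a ≤ m} := fun b hb ↦
    ⟨hf b hb, (le b hb).trans (le_f b hb)⟩
  have f_injOn : S.InjOn f := fun b hb c hc hbc ↦ by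
    by_contra hne
    exact (hf b hb).1 (top_le_iff.mp (hS hb hc hne (le_f b hb) (hbc ▸ le_f c hc)))
  exact Set.Finite.of_injOn f_mapsTo f_injOn hfin

end Order

section Semiring

variable {R : Type*} [Semiring R] {A H I J M N : Ideal R}

/-- `H` is a homogeneous ideal whose unique maximal overideal is `M`. The zero ideal is not
excluded: in a local ring it is homogeneous at the maximal ideal. -/
structure IsHomogeneousAt (H M : Ideal R) : Prop where
  fg : H.FG
  isMaximal : M.IsMaximal
  le : H ≤ M
  eq_of_le : ∀ {N : Ideal R}, N.IsMaximal → H ≤ N → N = M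

theorem IsHomogeneousAt.ne_top (h : IsHomogeneousAt H M) : H ≠ ⊤ :=
  ne_top_of_le_ne_top h.isMaximal.ne_top h.le

theorem IsHomogeneousAt.codisjoint (hI : IsHomogeneousAt I M) (hJ : IsHomogeneousAt J N)
    (hMN : M ≠ N) : Codisjoint I J := by
  rw [codisjoint_iff]
  by_contra hne
  obtain ⟨Q, hQ, hle⟩ := Ideal.exists_le_maximal _ hne
  have hQM : Q = M := hI.eq_of_le hQ (le_sup_left.trans hle)
  have hQN : Q = N := hJ.eq_of_le hQ (le_sup_right.trans hle)
  exact hMN (hQM.symm.trans hQN)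

theorem exists_fg_codisjoint_between (hI : I.FG) (hIM : I ≤ M) (hIN : I ≤ N)
    (hMN : Codisjoint M N) :
    ∃ J K : Ideal R, J.FG ∧ K.FG ∧ J ≤ M ∧ K ≤ N ∧ I ≤ J ∧ I ≤ K ∧ Codisjoint J K := by
  obtain ⟨a, ha, b, hb, hab⟩ :=
    Submodule.mem_sup.mp ((Ideal.eq_top_iff_one _).mp hMN.eq_top)
  refine ⟨I ⊔ Ideal.span {a}, I ⊔ Ideal.span {b},
    Submodule.FG.sup hI (Submodule.fg_span_singleton a),
    Submodule.FG.sup hI (Submodule.fg_span_singleton b),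
    sup_le hIM ((Ideal.span_singleton_le_iff_mem M).mpr ha),
    sup_le hIN ((Ideal.span_singleton_le_iff_mem N).mpr hb), le_sup_left, le_sup_left, ?_⟩
  rw [codisjoint_iff, Ideal.eq_top_iff_one, ← hab]
  exact Submodule.add_mem_sup (Ideal.mem_sup_right (Ideal.mem_span_singleton_self a))
    (Ideal.mem_sup_right (Ideal.mem_span_singleton_self b))

theorem exists_fg_codisjoint_of_not_isHomogeneousAt (hI : I.FG) (hI_top : I ≠ ⊤)
    (h : ∀ M, ¬ IsHomogeneousAt I M) :
    ∃ J K : Ideal R, J.FG ∧ K.FG ∧ J ≠ ⊤ ∧ K ≠ ⊤ ∧ I ≤ J ∧ I ≤ K ∧ Codisjoint J K := by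
  obtain ⟨M, hM, hIM⟩ := Ideal.exists_le_maximal I hI_top
  obtain ⟨N, hN, hIN, hNM⟩ : ∃ N : Ideal R, N.IsMaximal ∧ I ≤ N ∧ N ≠ M := by
    by_contra! hunique
    exact h M ⟨hI, hM, hIM, hunique _⟩
  obtain ⟨J, K, hJ, hK, hJM, hKN, hIJ, hIK, hJK⟩ := exists_fg_codisjoint_between hI hIM hIN
    (codisjoint_iff.mpr (hM.coprime_of_ne hN hNM.symm))
  exact ⟨J, K, hJ, hK, ne_top_of_le_ne_top hM.ne_top hJM, ne_top_of_le_ne_top hN.ne_top hKN,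
    hIJ, hIK, hJK⟩

/-- `A` is contained in at most finitely many mutually comaximal proper finitely generated ideals:
every family of such ideals is finite, with no common bound on the sizes. Comaximality is expressed
as codisjointness in the lattice of ideals. -/
def FinitelyManyComaximalAbove (A : Ideal R) : Prop :=
  ∀ S : Set (Ideal R), (∀ I ∈ S, I ≠ ⊤ ∧ I.FG ∧ A ≤ I) → S.Pairwise Codisjoint → S.Finite

theorem finitelyManyComaximalAbove_iff :
    FinitelyManyComaximalAbove A ↔ ∀ S : Set (Ideal R), (∀ I ∈ S, I ≠ ⊤ ∧ I.FG ∧ A ≤ I) →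
      (∀ I ∈ S, ∀ J ∈ S, I ≠ J → I + J = ⊤) → S.Finite := by
  simp only [FinitelyManyComaximalAbove, Set.Pairwise, codisjoint_iff, Submodule.add_eq_sup]

theorem FinitelyManyComaximalAbove.mono (h : FinitelyManyComaximalAbove A) (hAI : A ≤ I) :
    FinitelyManyComaximalAbove I := fun S hS ↦
  h S fun J hJ ↦ ⟨(hS J hJ).1, (hS J hJ).2.1, hAI.trans (hS J hJ).2.2⟩

theorem FinitelyManyComaximalAbove.of_finite_maximal
    (h : {M : Ideal R | M.IsMaximal ∧ A ≤ M}.Finite) : FinitelyManyComaximalAbove A := by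
  simp only [Ideal.isMaximal_def] at h
  exact fun S hS hpair ↦ finite_of_pairwise_codisjoint_of_finite_coatoms hpair
    (fun I hI ↦ (hS I hI).1) (fun I hI ↦ (hS I hI).2.2) h

theorem FinitelyManyComaximalAbove.exists_isHomogeneousAt (h : FinitelyManyComaximalAbove I)
    (hI : I.FG) (hI_top : I ≠ ⊤) : ∃ H M : Ideal R, I ≤ H ∧ IsHomogeneousAt H M := by
  by_contra! hnone
  obtain ⟨s, hs, hpair⟩ := exists_seq_pairwise_codisjoint
    (p := fun J : Ideal R ↦ J ≠ ⊤ ∧ J.FG ∧ I ≤ J) (a := I)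
    (fun J ⟨hJ_top, hJ, hIJ⟩ ↦ by
      obtain ⟨K, L, hK, hL, hK_top, hL_top, hJK, hJL, hKL⟩ :=
        exists_fg_codisjoint_of_not_isHomogeneousAt hJ hJ_top fun M ↦ hnone J M hIJ
      exact ⟨K, L, ⟨hK_top, hK, hIJ.trans hJK⟩, ⟨hL_top, hL, hIJ.trans hJL⟩, hJK, hJL, hKL⟩)
    ⟨hI_top, hI, le_rfl⟩
  have s_injective : Function.Injective s := fun m n hmn ↦ by
    by_contra hne
    exact (hpair hne).ne (hs m).1 hmn
  refine Set.infinite_range_of_injective s_injective (h _ (Set.forall_mem_range.mpr hs) ?_)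
  rintro _ ⟨m, rfl⟩ _ ⟨n, rfl⟩ hmn
  exact hpair (ne_of_apply_ne s hmn)

theorem FinitelyManyComaximalAbove.finite_isHomogeneousAt (h : FinitelyManyComaximalAbove A) :
    {M : Ideal R | ∃ H, A ≤ H ∧ IsHomogeneousAt H M}.Finite := by
  set P := {M : Ideal R | ∃ H, A ≤ H ∧ IsHomogeneousAt H M}
  have exists_homogeneous (M : Ideal R) (hM : M ∈ P) : ∃ H, A ≤ H ∧ IsHomogeneousAt H M := hM
  choose! H le_H hH using exists_homogeneous
  have codisjoint_H {M N : Ideal R} (hM : M ∈ P) (hN : N ∈ P) (hMN : M ≠ N) :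
      Codisjoint (H M) (H N) := (hH M hM).codisjoint (hH N hN) hMN
  have H_injOn : P.InjOn H := fun M hM N hN hMN ↦ by
    by_contra hne
    exact (codisjoint_H hM hN hne).ne (hH M hM).ne_top hMN
  refine Set.Finite.of_finite_image (h (H '' P) ?_ ?_) H_injOn
  · rintro _ ⟨M, hM, rfl⟩
    exact ⟨(hH M hM).ne_top, (hH M hM).fg, le_H M hM⟩
  · rintro _ ⟨M, hM, rfl⟩ _ ⟨N, hN, rfl⟩ hMN
    exact codisjoint_H hM hN (ne_of_apply_ne H hMN)

end Semiring

section CommSemiring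

variable {R : Type*} [CommSemiring R]

theorem exists_mem_forall_notMem_of_isMaximal {P : Set (Ideal R)} (hP : P.Finite)
    (hmax : ∀ N ∈ P, N.IsMaximal) {M : Ideal R} (hM : M.IsMaximal) (hMP : M ∉ P) :
    ∃ m ∈ M, ∀ N ∈ P, m ∉ N := by
  have hsup : M ⊔ ⨅ N ∈ hP.toFinset, N = ⊤ := Ideal.sup_iInf_eq_top fun N hN ↦
    have hNP : N ∈ P := hP.mem_toFinset.mp hN
    hM.coprime_of_ne (hmax N hNP) fun hMN ↦ hMP (hMN ▸ hNP)
  obtain ⟨m, hm, c, hc, hmc⟩ := Submodule.mem_sup.mp ((Ideal.eq_top_iff_one _).mp hsup)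
  simp only [Ideal.mem_iInf, hP.mem_toFinset] at hc
  refine ⟨m, hm, fun N hN hmN ↦ (hmax N hN).ne_top ?_⟩
  exact (Ideal.eq_top_iff_one N).mpr (hmc ▸ N.add_mem hmN (hc N hN))

theorem FinitelyManyComaximalAbove.finite_maximal {A : Ideal R}
    (h : FinitelyManyComaximalAbove A) (hA : A.FG) :
    {M : Ideal R | M.IsMaximal ∧ A ≤ M}.Finite := by
  refine h.finite_isHomogeneousAt.subset fun M ⟨hM, hAM⟩ ↦ ?_
  by_contra hMP
  obtain ⟨m, hm, hm_notMem⟩ :=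
    exists_mem_forall_notMem_of_isMaximal h.finite_isHomogeneousAt
      (fun N ⟨_, _, hN⟩ ↦ hN.isMaximal) hM hMP
  have sup_le_M : A ⊔ Ideal.span {m} ≤ M :=
    sup_le hAM ((Ideal.span_singleton_le_iff_mem M).mpr hm)
  obtain ⟨H, N, hle, hH⟩ := (h.mono le_sup_left).exists_isHomogeneousAt
    (Submodule.FG.sup hA (Submodule.fg_span_singleton m)) (ne_top_of_le_ne_top hM.ne_top sup_le_M)
  have hmN : m ∈ N := hH.le (hle (Ideal.mem_sup_right (Ideal.mem_span_singleton_self m)))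
  exact hm_notMem N ⟨H, le_sup_left.trans hle, hH⟩ hmN

end CommSemiring

theorem stmt_4_general {R : Type*} [CommSemiring R] :
    (∀ x : R, x ≠ 0 → ¬ IsUnit x → {M : Ideal R | M.IsMaximal ∧ x ∈ M}.Finite) ↔
    (∀ A : Ideal R, A ≠ ⊥ → A ≠ ⊤ → A.FG →
      ∀ S : Set (Ideal R),
        (∀ I ∈ S, I ≠ ⊤ ∧ I.FG ∧ A ≤ I) →
        (∀ I ∈ S, ∀ J ∈ S, I ≠ J → I + J = ⊤) → S.Finite) := by
  simp only [← finitelyManyComaximalAbove_iff]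
  constructor
  · intro h A hA_bot hA_top _
    obtain ⟨x, hxA, hx⟩ := Submodule.exists_mem_ne_zero_of_ne_bot hA_bot
    have hx_unit : ¬ IsUnit x := fun hu ↦ hA_top (Ideal.eq_top_of_isUnit_mem A hxA hu)
    exact .of_finite_maximal ((h x hx hx_unit).subset fun M hM ↦ ⟨hM.1, hM.2 hxA⟩)
  · intro h x hx hx_unit
    have hfg : (Ideal.span {x}).FG := Submodule.fg_span_singleton x
    have habove : FinitelyManyComaximalAbove (Ideal.span {x}) :=
      h _ (Ideal.span_singleton_eq_bot.not.mpr hx)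
        (Ideal.span_singleton_eq_top.not.mpr hx_unit) hfg
    simpa only [Ideal.span_singleton_le_iff_mem] using habove.finite_maximal hfg

theorem stmt_4 {D : Type*} [CommRing D] [IsDomain D] :
    (∀ x : D, x ≠ 0 → ¬ IsUnit x → {M : Ideal D | M.IsMaximal ∧ x ∈ M}.Finite) ↔
    (∀ A : Ideal D, A ≠ ⊥ → A ≠ ⊤ → A.FG →
      ∀ S : Set (Ideal D),
        (∀ I ∈ S, I ≠ ⊤ ∧ I.FG ∧ A ≤ I) →
        (∀ I ∈ S, ∀ J ∈ S, I ≠ J → I + J = ⊤) → S.Finite) :=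
  stmt_4_general
end

section
/- Let D be an integral domain and let A be a nonzero proper finitely generated ideal of D such that every set of pairwise comaximal proper finitely generated ideals, each containing A, is finite. Then A is contained in at least one homogeneous ideal of D (a nonzero proper finitely generated ideal lying in exactly one maximal ideal). -/
/-!
If no finitely generated ideal above `A` is homogeneous, each such proper ideal lies in two distinct
maximal ideals, and hence splits: it is contained in two comaximal proper finitely generated ideals.
Splitting `A` and then, repeatedly, one of the two halves just obtained, while setting the other
half aside, produces an infinite pairwise comaximal family: a half set aside is comaximal to its
twin, and all later halves contain that twin.
-/

open Function

section Order

variable {α : Type*} [PartialOrder α] [OrderTop α]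

theorem injective_of_pairwise_codisjoint {ι : Type*} {u : ι → α}
    (hu : Pairwise (Codisjoint on u)) (hne : ∀ i, u i ≠ ⊤) : Injective u := by
  intro i j hij
  by_contra hne_ij
  have hself : Codisjoint (u i) (u j) := hu hne_ij
  rw [hij, codisjoint_self] at hself
  exact hne j hself

theorem exists_seq_pairwise_codisjoint_s5 {s : Set α} (hs : s.Nonempty)
    (hsplit : ∀ a ∈ s, ∃ b ∈ s, ∃ c ∈ s, a ≤ b ∧ a ≤ c ∧ Codisjoint b c) :
    ∃ u : ℕ → α, (∀ n, u n ∈ s) ∧ Pairwise (Codisjoint on u) := by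
  obtain ⟨a₀, ha₀⟩ := hs
  have hsplit' : ∀ a : s, ∃ b c : s, a ≤ b ∧ a ≤ c ∧ Codisjoint (b : α) (c : α) := by
    rintro ⟨a, ha⟩
    obtain ⟨b, hb, c, hc, h⟩ := hsplit a ha
    exact ⟨⟨b, hb⟩, ⟨c, hc⟩, h⟩
  choose next aside le_next le_aside codisjoint_next_aside using hsplit'
  let v : ℕ → s := fun n ↦ next^[n] ⟨a₀, ha₀⟩
  have hv : Monotone v := fun _ _ hmn ↦ monotone_iterate_of_id_le le_next hmn _
  refine ⟨fun n ↦ aside (v n), fun n ↦ (aside (v n)).2, (Std.Symm.pairwise_on _).2 ?_⟩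
  intro m n hmn
  have next_le_aside : (next (v m) : α) ≤ aside (v n) := Subtype.coe_le_coe.2 <|
    calc next (v m) = v (m + 1) := (iterate_succ_apply' next m _).symm
      _ ≤ v n := hv hmn
      _ ≤ aside (v n) := le_aside (v n)
  exact ((codisjoint_next_aside (v m)).mono_left next_le_aside).symm

theorem exists_infinite_pairwise_codisjoint {s : Set α} (hs : s.Nonempty) (htop : ⊤ ∉ s)
    (hsplit : ∀ a ∈ s, ∃ b ∈ s, ∃ c ∈ s, a ≤ b ∧ a ≤ c ∧ Codisjoint b c) :
    ∃ t ⊆ s, t.Infinite ∧ t.Pairwise Codisjoint := by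
  obtain ⟨u, hus, hu⟩ := exists_seq_pairwise_codisjoint_s5 hs hsplit
  have hinj : Injective u :=
    injective_of_pairwise_codisjoint hu fun n hn ↦ htop (hn ▸ hus n)
  exact ⟨Set.range u, Set.range_subset_iff.2 hus, Set.infinite_range_of_injective hinj,
    hu.range_pairwise⟩

end Order

theorem exists_fg_codisjoint_of_le {R : Type*} [Semiring R] {I P Q : Ideal R} (hI : I.FG)
    (hIP : I ≤ P) (hIQ : I ≤ Q) (hPQ : Codisjoint P Q) :
    ∃ J K : Ideal R, J.FG ∧ K.FG ∧ J ∈ Set.Icc I P ∧ K ∈ Set.Icc I Q ∧ Codisjoint J K := by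
  have one_mem : (1 : R) ∈ P ⊔ Q := hPQ.eq_top ▸ Submodule.mem_top
  obtain ⟨x, hx, y, hy, hxy⟩ := Submodule.mem_sup.1 one_mem
  have codisjoint_span : Codisjoint (Ideal.span {x}) (Ideal.span {y}) := by
    rw [codisjoint_iff, Ideal.eq_top_iff_one, ← hxy]
    exact Submodule.add_mem_sup (Ideal.mem_span_singleton_self x) (Ideal.mem_span_singleton_self y)
  exact ⟨I ⊔ Ideal.span {x}, I ⊔ Ideal.span {y},
    Submodule.FG.sup hI (Submodule.fg_span_singleton x),
    Submodule.FG.sup hI (Submodule.fg_span_singleton y),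
    ⟨le_sup_left, sup_le hIP ((Ideal.span_singleton_le_iff_mem P).2 hx)⟩,
    ⟨le_sup_left, sup_le hIQ ((Ideal.span_singleton_le_iff_mem Q).2 hy)⟩,
    codisjoint_span.mono le_sup_right le_sup_right⟩

section Homogeneous

variable {R : Type*} [CommRing R] {I : Ideal R}

theorem exists_isMaximal_ne_of_not_isHomogIdeal (hI0 : I ≠ ⊥) (hIt : I ≠ ⊤) (hI : I.FG)
    (hhom : ¬ IsHomogIdeal I) :
    ∃ M N : Ideal R, M.IsMaximal ∧ N.IsMaximal ∧ M ≠ N ∧ I ≤ M ∧ I ≤ N := by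
  obtain ⟨M, hM, hIM⟩ := I.exists_le_maximal hIt
  by_contra! hunique
  exact hhom ⟨hI0, hIt, hI, M, ⟨hM, hIM⟩, fun N ⟨hN, hIN⟩ ↦
    by_contra fun hNM ↦ hunique M N hM hN (Ne.symm hNM) hIM hIN⟩

theorem exists_fg_codisjoint_of_not_isHomogIdeal (hI0 : I ≠ ⊥) (hIt : I ≠ ⊤) (hI : I.FG)
    (hhom : ¬ IsHomogIdeal I) :
    ∃ J K : Ideal R, (J ≠ ⊤ ∧ J.FG ∧ I ≤ J) ∧ (K ≠ ⊤ ∧ K.FG ∧ I ≤ K) ∧ Codisjoint J K := by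
  obtain ⟨M, N, hM, hN, hMN, hIM, hIN⟩ :=
    exists_isMaximal_ne_of_not_isHomogIdeal hI0 hIt hI hhom
  obtain ⟨J, K, hJ, hK, ⟨hIJ, hJM⟩, ⟨hIK, hKN⟩, hJK⟩ :=
    exists_fg_codisjoint_of_le hI hIM hIN (hM.out.codisjoint_of_ne hN.out hMN)
  exact ⟨J, K, ⟨ne_top_of_le_ne_top hM.ne_top hJM, hJ, hIJ⟩,
    ⟨ne_top_of_le_ne_top hN.ne_top hKN, hK, hIK⟩, hJK⟩

end Homogeneous

theorem stmt_5_general {R : Type*} [CommRing R] (A : Ideal R)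
    (hA0 : A ≠ ⊥) (hAt : A ≠ ⊤) (hAfg : A.FG)
    (hfin : ∀ S : Set (Ideal R),
      (∀ I ∈ S, I ≠ ⊤ ∧ I.FG ∧ A ≤ I) →
      (∀ I ∈ S, ∀ J ∈ S, I ≠ J → I + J = ⊤) → S.Finite) :
    ∃ J : Ideal R, IsHomogIdeal J ∧ A ≤ J := by
  by_contra! hno
  let s : Set (Ideal R) := {I | I ≠ ⊤ ∧ I.FG ∧ A ≤ I}
  have hsplit : ∀ I ∈ s, ∃ J ∈ s, ∃ K ∈ s, I ≤ J ∧ I ≤ K ∧ Codisjoint J K := by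
    rintro I ⟨hIt, hI, hAI⟩
    obtain ⟨J, K, ⟨hJt, hJ, hIJ⟩, ⟨hKt, hK, hIK⟩, hJK⟩ :=
      exists_fg_codisjoint_of_not_isHomogIdeal (ne_bot_of_le_ne_bot hA0 hAI) hIt hI
        fun hhom ↦ hno I hhom hAI
    exact ⟨J, ⟨hJt, hJ, hAI.trans hIJ⟩, K, ⟨hKt, hK, hAI.trans hIK⟩, hIJ, hIK, hJK⟩
  have hs : s.Nonempty := ⟨A, hAt, hAfg, le_rfl⟩
  have htop : ⊤ ∉ s := fun h ↦ h.1 rfl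
  obtain ⟨t, hts, ht_inf, ht⟩ := exists_infinite_pairwise_codisjoint hs htop hsplit
  exact ht_inf (hfin t hts fun I hI J hJ hIJ ↦ (ht hI hJ hIJ).eq_top)

theorem stmt_5 {D : Type*} [CommRing D] [IsDomain D] (A : Ideal D)
    (hA0 : A ≠ ⊥) (hAt : A ≠ ⊤) (hAfg : A.FG)
    (hfin : ∀ S : Set (Ideal D),
      (∀ I ∈ S, I ≠ ⊤ ∧ I.FG ∧ A ≤ I) →
      (∀ I ∈ S, ∀ J ∈ S, I ≠ J → I + J = ⊤) → S.Finite) :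
    ∃ J : Ideal D, IsHomogIdeal J ∧ A ≤ J :=
  stmt_5_general A hA0 hAt hAfg hfin
end

section
/- Let M be a pre-Riesz monoid. A nonempty subset S of M is a basis of M if and only if S is a disjoint set and, for every s ∈ S and every pair of distinct elements x, y of (M ∖ S) ∪ {s}, the set (S ∖ {s}) ∪ {x, y} is not a disjoint set. -/
variable {M : Type*} [AddCommMonoid M] [PartialOrder M]

/-- `h` is homogeneous: `h` is strictly positive and any two strictly positive
elements below `h` have a common strictly positive lower bound. -/
def Homog (h : M) : Prop :=
  0 < h ∧ ∀ r s : M, 0 < r → r ≤ h → 0 < s → s ≤ h → ∃ t : M, 0 < t ∧ t ≤ r ∧ t ≤ s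

/-- `x` and `y` are disjoint: no strictly positive common lower bound. -/
def Disj (x y : M) : Prop := ¬ ∃ r : M, 0 < r ∧ r ≤ x ∧ r ≤ y

/-- A disjoint set: a set of pairwise disjoint strictly positive elements. -/
def DisjSet (S : Set M) : Prop :=
  (∀ x ∈ S, 0 < x) ∧ ∀ x ∈ S, ∀ y ∈ S, x ≠ y → Disj x y

/-- A basis: a disjoint set, maximal under inclusion among disjoint sets, all of whose
elements are homogeneous. -/
def IsBasisSet (S : Set M) : Prop :=
  DisjSet S ∧ (∀ T : Set M, DisjSet T → S ⊆ T → T = S) ∧ ∀ x ∈ S, Homog x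

/-- A pre-Riesz monoid: upper directed, and every finite family of strictly positive
elements either has `0` as a greatest lower bound or admits a strictly positive
common lower bound. -/
def PreRiesz (M : Type*) [AddCommMonoid M] [PartialOrder M] : Prop :=
  (∀ a b : M, ∃ c : M, a ≤ c ∧ b ≤ c) ∧
  ∀ s : Finset M, s.Nonempty → (∀ x ∈ s, 0 < x) →
    IsGLB (↑s : Set M) (0 : M) ∨ ∃ r : M, 0 < r ∧ ∀ x ∈ s, r ≤ x

/-!
Say that two elements meet if they are not disjoint. If `S` is a maximal disjoint set, a strictly
positive element that is disjoint from all of `S \ {s}` must meet `s`. So if `x` and `y` could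
jointly replace `s`, both would meet `s`, and homogeneity of `s` would make them meet each other.
Conversely, a strictly positive `x ∉ S` disjoint from all of `S` yields the forbidden replacement of
`s` by `{x, s}`, and two disjoint strictly positive elements below `s` yield the forbidden
replacement of `s` by these two.
-/

theorem not_disj_iff {x y : M} : ¬ Disj x y ↔ ∃ r, 0 < r ∧ r ≤ x ∧ r ≤ y :=
  not_not

theorem not_disj_of_le {x y : M} (hx : 0 < x) (hxy : x ≤ y) : ¬ Disj x y :=
  not_disj_iff.2 ⟨x, hx, le_rfl, hxy⟩

theorem Disj.symm {x y : M} (h : Disj x y) : Disj y x :=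
  fun ⟨r, hr, hry, hrx⟩ => h ⟨r, hr, hrx, hry⟩

theorem Disj.mono_left {x x' y : M} (hx : x' ≤ x) (h : Disj x y) : Disj x' y :=
  fun ⟨r, hr, hrx, hry⟩ => h ⟨r, hr, hrx.trans hx, hry⟩

theorem Homog.not_disj_of_not_disj {h x y : M} (hh : Homog h) (hx : ¬ Disj x h) (hy : ¬ Disj y h) :
    ¬ Disj x y := by
  obtain ⟨r, hr, hrx, hrh⟩ := not_disj_iff.1 hx
  obtain ⟨u, hu, huy, huh⟩ := not_disj_iff.1 hy
  obtain ⟨t, ht, htr, htu⟩ := hh.2 r u hr hrh hu huh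
  exact not_disj_iff.2 ⟨t, ht, htr.trans hrx, htu.trans huy⟩

theorem DisjSet.subset {S T : Set M} (hT : DisjSet T) (hST : S ⊆ T) : DisjSet S :=
  ⟨fun x hx => hT.1 x (hST hx), fun x hx y hy => hT.2 x (hST hx) y (hST hy)⟩

protected theorem DisjSet.insert {S : Set M} {x : M} (hS : DisjSet S) (hx : 0 < x)
    (hxS : ∀ y ∈ S, Disj x y) : DisjSet (insert x S) := by
  refine ⟨Set.forall_mem_insert.2 ⟨hx, hS.1⟩, ?_⟩
  rintro a (rfl | ha) b (rfl | hb) hab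
  · exact absurd rfl hab
  · exact hxS b hb
  · exact (hxS a ha).symm
  · exact hS.2 a ha b hb hab

theorem DisjSet.eq_of_le {S : Set M} {x y : M} (hS : DisjSet S) (hx : x ∈ S) (hy : y ∈ S)
    (hxy : x ≤ y) : x = y :=
  by_contra fun hne => not_disj_of_le (hS.1 x hx) hxy (hS.2 x hx y hy hne)

theorem DisjSet.mem_compl_union_singleton_of_le {S : Set M} {s x : M} (hS : DisjSet S)
    (hs : s ∈ S) (hxs : x ≤ s) : x ∈ Sᶜ ∪ {s} :=
  or_iff_not_imp_left.2 fun hx => hS.eq_of_le (Set.notMem_compl_iff.1 hx) hs hxs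

theorem DisjSet.disj_of_le_of_mem_sdiff {S : Set M} {s x a : M} (hS : DisjSet S) (hs : s ∈ S)
    (hxs : x ≤ s) (ha : a ∈ S \ {s}) : Disj x a :=
  (hS.2 s hs a ha.1 (Ne.symm ha.2)).mono_left hxs

theorem DisjSet.sdiff_singleton_union_pair_of_le {S : Set M} {s x y : M} (hS : DisjSet S)
    (hs : s ∈ S) (hx : 0 < x) (hxs : x ≤ s) (hy : 0 < y) (hys : y ≤ s) (hxy : Disj x y) :
    DisjSet (S \ {s} ∪ {x, y}) := by
  have hyS : DisjSet (insert y (S \ {s})) :=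
    (hS.subset Set.sdiff_subset).insert hy fun _ => hS.disj_of_le_of_mem_sdiff hs hys
  have hxyS : DisjSet (insert x (insert y (S \ {s}))) :=
    hyS.insert hx <| Set.forall_mem_insert.2
      ⟨hxy, fun _ => hS.disj_of_le_of_mem_sdiff hs hxs⟩
  rwa [Set.union_comm, Set.insert_union, Set.singleton_union]

theorem exists_mem_not_disj_of_maximal {S : Set M} (hS : Maximal DisjSet S) {x : M}
    (hx : 0 < x) : ∃ s ∈ S, ¬ Disj x s := by
  by_contra! hxS
  have hxmem : x ∈ S := hS.mem_of_prop_insert (hS.prop.insert hx hxS)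
  exact not_disj_of_le hx le_rfl (hxS x hxmem)

theorem not_disj_of_disjSet_insert_sdiff {S : Set M} (hS : Maximal DisjSet S) {s x : M}
    (hx : x ∈ Sᶜ ∪ {s}) (hxS : DisjSet (insert x (S \ {s}))) : ¬ Disj x s := by
  have hx0 : 0 < x := hxS.1 x (Set.mem_insert x _)
  obtain ⟨a, ha, hxa⟩ := exists_mem_not_disj_of_maximal hS hx0
  obtain rfl | has := eq_or_ne a s
  · exact hxa
  · have hne : x ≠ a := by
      rintro rfl
      exact hx.elim (· ha) has
    exact absurd (hxS.2 x (Set.mem_insert x _) a (Set.mem_insert_of_mem x ⟨ha, has⟩) hne) hxa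

theorem isBasisSet_iff_maximal_and_homog {S : Set M} :
    IsBasisSet S ↔ Maximal DisjSet S ∧ ∀ s ∈ S, Homog s := by
  rw [IsBasisSet, ← and_assoc, maximal_iff]
  simp only [eq_comm]

/-- `s` cannot be replaced in `S` by two distinct elements: no two elements outside `S \ {s}`,
one of which may be `s` itself, form a disjoint set together with `S \ {s}`. -/
def Unsplittable (S : Set M) (s : M) : Prop :=
  ∀ x y : M, x ∈ Sᶜ ∪ {s} → y ∈ Sᶜ ∪ {s} → x ≠ y → ¬ DisjSet ((S \ {s}) ∪ {x, y})

theorem Homog.unsplittable {S : Set M} {s : M} (hs : Homog s) (hS : Maximal DisjSet S) :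
    Unsplittable S s := by
  intro x y hx hy hxy hD
  have hxD : x ∈ S \ {s} ∪ {x, y} := by simp
  have hyD : y ∈ S \ {s} ∪ {x, y} := by simp
  have meets_s {z : M} (hz : z ∈ Sᶜ ∪ {s}) (hzD : z ∈ S \ {s} ∪ {x, y}) : ¬ Disj z s :=
    not_disj_of_disjSet_insert_sdiff hS hz <|
      hD.subset (Set.insert_subset hzD Set.subset_union_left)
  exact hs.not_disj_of_not_disj (meets_s hx hxD) (meets_s hy hyD) (hD.2 x hxD y hyD hxy)

theorem Unsplittable.maximal {S : Set M} {s : M} (h : Unsplittable S s) (hS : DisjSet S)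
    (hs : s ∈ S) : Maximal DisjSet S := by
  refine ⟨hS, fun T hT hST x hxT => by_contra fun hxS => ?_⟩
  have hsub : S \ {s} ∪ {x, s} ⊆ T :=
    Set.union_subset (Set.sdiff_subset.trans hST) (Set.pair_subset hxT (hST hs))
  exact h x s (Or.inl hxS) (Or.inr rfl) (ne_of_mem_of_not_mem hs hxS).symm (hT.subset hsub)

theorem Unsplittable.homog {S : Set M} {s : M} (h : Unsplittable S s) (hS : DisjSet S)
    (hs : s ∈ S) : Homog s := by
  refine ⟨hS.1 s hs, fun x y hx hxs hy hys => not_disj_iff.1 fun hxy => ?_⟩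
  have hne : x ≠ y := fun heq => not_disj_of_le hx heq.le hxy
  exact h x y (hS.mem_compl_union_singleton_of_le hs hxs)
    (hS.mem_compl_union_singleton_of_le hs hys) hne
    (hS.sdiff_singleton_union_pair_of_le hs hx hxs hy hys hxy)

theorem stmt_10_general {S : Set M} (hne : S.Nonempty) :
    IsBasisSet S ↔
      DisjSet S ∧ ∀ s ∈ S, ∀ x y : M, x ∈ Sᶜ ∪ {s} → y ∈ Sᶜ ∪ {s} → x ≠ y →
        ¬ DisjSet ((S \ {s}) ∪ {x, y}) := by
  change IsBasisSet S ↔ DisjSet S ∧ ∀ s ∈ S, Unsplittable S s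
  rw [isBasisSet_iff_maximal_and_homog]
  constructor
  · rintro ⟨hmax, hhom⟩
    exact ⟨hmax.prop, fun s hs => (hhom s hs).unsplittable hmax⟩
  · rintro ⟨hS, hun⟩
    obtain ⟨s₀, hs₀⟩ := hne
    exact ⟨(hun s₀ hs₀).maximal hS hs₀, fun s hs => (hun s hs).homog hS hs⟩

theorem stmt_10 {M : Type*} [AddCommMonoid M] [PartialOrder M]
    (hcomp : ∀ a b c : M, a ≤ b → a + c ≤ b + c) (hbot : ∀ x : M, 0 ≤ x)
    (hpR : PreRiesz M) (S : Set M) (hne : S.Nonempty) :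
    IsBasisSet S ↔
      DisjSet S ∧ ∀ s ∈ S, ∀ x y : M, x ∈ Sᶜ ∪ {s} → y ∈ Sᶜ ∪ {s} → x ≠ y →
        ¬ DisjSet ((S \ {s}) ∪ {x, y}) :=
  stmt_10_general hne
end

section
/- Let M be a nontrivial pre-Riesz monoid. The following are equivalent: (i) M satisfies Conrad's F-condition (for every strictly positive x, every set of pairwise disjoint strictly positive elements all ≤ x is finite); (ii) every strictly positive element of M exceeds at least one homogeneous element, and for every strictly positive x every set of pairwise disjoint homogeneous elements all ≤ x is finite; (iii) there is a subset Γ of strictly positive elements of M such that every strictly positive element of M exceeds at least one member of Γ and, for every strictly positive x, every set of pairwise disjoint members of Γ all ≤ x is finite. -/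
variable {M : Type*} [AddCommMonoid M] [PartialOrder M]

/-! Only the order on the strictly positive elements matters, so they may be replaced by an
arbitrary preorder, with incompatibility for disjointness. If no element below `x` is homogeneous,
repeatedly splitting `x` into two incompatible parts, keeping one and splitting the other, yields
an infinite incompatible family below `x`. Conversely, let `Γ` be coinitial. Choosing a member of
`Γ` below each element of an incompatible family is injective and preserves incompatibility, so
finiteness of the bounded incompatible families in `Γ` implies that of all of them. -/

section Preorder

variable {P : Type*} [Preorder P]

/-- Existence of a common lower bound. In the preorder of strictly positive elements of a monoid,
incompatibility is disjointness. -/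
def Compatible (x y : P) : Prop := ∃ r, r ≤ x ∧ r ≤ y

/-- Homogeneity in a preorder without a least element: any two elements below `h` are
compatible. -/
def Homogeneous (h : P) : Prop := ∀ r ≤ h, ∀ s ≤ h, Compatible r s

/-- Conrad's F-condition for the members of `Γ`: every set of pairwise incompatible members of `Γ`
lying below a common element is finite. Conrad's own condition is the case `Γ = Set.univ`. -/
def ConradF (Γ : Set P) : Prop :=
  ∀ S ⊆ Γ, BddAbove S → S.Pairwise (¬ Compatible · ·) → S.Finite

namespace Compatible

variable {x y x' y' : P}

theorem refl (x : P) : Compatible x x := ⟨x, le_rfl, le_rfl⟩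

theorem symm (h : Compatible x y) : Compatible y x :=
  h.imp fun _ => And.symm

theorem mono (hx : x ≤ x') (hy : y ≤ y') (h : Compatible x y) : Compatible x' y' :=
  h.imp fun _ hr => ⟨hr.1.trans hx, hr.2.trans hy⟩

end Compatible

theorem injOn_of_pairwise_not_compatible {ι : Type*} {s : Set ι} {f : ι → P}
    (hf : s.Pairwise fun i j => ¬ Compatible (f i) (f j)) : s.InjOn f := by
  intro i hi j hj hij
  by_contra hne
  exact hf hi hj hne (hij ▸ .refl (f i))

theorem exists_nat_pairwise_not_compatible {x : P}
    (hx : ∀ y ≤ x, ¬ Homogeneous y) :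
    ∃ f : ℕ → P, (∀ n, f n ≤ x) ∧ Pairwise fun m n => ¬ Compatible (f m) (f n) := by
  have split (y : Set.Iic x) : ∃ r s : Set.Iic x, r ≤ y ∧ s ≤ y ∧ ¬ Compatible (r : P) s := by
    have not_homogeneous := hx y y.2
    simp only [Homogeneous, not_forall] at not_homogeneous
    obtain ⟨r, hr, s, hs, hrs⟩ := not_homogeneous
    exact ⟨⟨r, hr.trans y.2⟩, ⟨s, hs.trans y.2⟩, hr, hs, hrs⟩
  choose part rest part_le rest_le not_compatible using split
  let u (n : ℕ) : Set.Iic x := rest^[n] ⟨x, le_rfl⟩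
  have u_succ (n : ℕ) : u (n + 1) = rest (u n) := Function.iterate_succ_apply' rest n _
  have u_antitone : Antitone u := fun _ _ hmn =>
    Function.antitone_iterate_of_le_id rest_le hmn _
  refine ⟨fun n => part (u n), fun n => (part (u n)).2, ?_⟩
  have : Std.Symm fun m n => ¬ Compatible (part (u m) : P) (part (u n)) :=
    ⟨fun _ _ h hc => h hc.symm⟩
  refine Pairwise.of_lt fun m n hmn hc => ?_
  have part_le_rest : part (u n) ≤ rest (u m) :=
    (part_le (u n)).trans ((u_antitone hmn).trans_eq (u_succ m))
  exact not_compatible (u m) (hc.mono le_rfl part_le_rest)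

namespace ConradF

variable {Γ Δ : Set P}

theorem mono (hΓΔ : Γ ⊆ Δ) (hΔ : ConradF Δ) : ConradF Γ :=
  fun S hS => hΔ S (hS.trans hΓΔ)

theorem isCoinitial_homogeneous (h : ConradF (Set.univ : Set P)) :
    IsCoinitial {h : P | Homogeneous h} := by
  by_contra! hx
  simp only [IsCoinitial, not_forall, not_exists, not_and'] at hx
  obtain ⟨x, hx⟩ := hx
  obtain ⟨f, hfx, hf⟩ := exists_nat_pairwise_not_compatible hx
  have f_injective : Function.Injective f :=
    Set.injOn_univ.1 (injOn_of_pairwise_not_compatible (hf.set_pairwise _))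
  exact Set.infinite_range_of_injective f_injective
    (h _ (Set.subset_univ _) ⟨x, Set.forall_mem_range.2 hfx⟩ (Pairwise.range_pairwise hf))

theorem univ_of_isCoinitial (hΓ : IsCoinitial Γ) (h : ConradF Γ) :
    ConradF (Set.univ : Set P) := by
  rintro S - ⟨x, hx⟩ hS
  choose g hgΓ hg using hΓ
  have image_pairwise : S.Pairwise fun y z => ¬ Compatible (g y) (g z) :=
    hS.mono' fun y z hyz hc => hyz (hc.mono (hg y) (hg z))
  refine (h (g '' S) ?_ ⟨x, ?_⟩ (Set.Pairwise.image image_pairwise)).of_finite_image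
    (injOn_of_pairwise_not_compatible image_pairwise)
  · exact Set.image_subset_iff.2 fun y _ => hgΓ y
  · exact Set.forall_mem_image.2 fun y hy => (hg y).trans (hx hy)

end ConradF

theorem isCoinitial_preimage_coe_iff {s Γ : Set P} (hΓ : Γ ⊆ s) :
    IsCoinitial ((↑) ⁻¹' Γ : Set s) ↔ IsCoinitialFor s Γ := by
  refine Subtype.forall.trans (forall₂_congr fun x hx => ⟨?_, ?_⟩)
  · exact fun ⟨g, hg, hgx⟩ => ⟨g, hg, hgx⟩
  · exact fun ⟨g, hg, hgx⟩ => ⟨⟨g, hΓ hg⟩, hg, hgx⟩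

theorem stmt_13_general (P : Type*) [Preorder P] :
    List.TFAE [
      ConradF (Set.univ : Set P),
      IsCoinitial {h : P | Homogeneous h} ∧ ConradF {h : P | Homogeneous h},
      ∃ Γ : Set P, IsCoinitial Γ ∧ ConradF Γ] := by
  tfae_have 1 → 2 := fun h => ⟨h.isCoinitial_homogeneous, h.mono (Set.subset_univ _)⟩
  tfae_have 2 → 3 := fun h => ⟨_, h⟩
  tfae_have 3 → 1 := fun ⟨_, hΓ, h⟩ => h.univ_of_isCoinitial hΓ
  tfae_finish

end Preorder

section StrictlyPositive

theorem not_compatible_iff_disj {x y : Set.Ioi (0 : M)} :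
    ¬ Compatible x y ↔ Disj (x : M) y := by
  simp only [Compatible, Disj, Subtype.exists, Set.mem_Ioi, ← Subtype.coe_le_coe, exists_prop]

theorem homogeneous_iff_homog {h : Set.Ioi (0 : M)} : Homogeneous h ↔ Homog (h : M) := by
  refine ⟨fun hh => ⟨h.2, fun r s hr hrh hs hsh => ?_⟩, fun hh r hr s hs => ?_⟩
  · obtain ⟨t, ht⟩ := hh ⟨r, hr⟩ hrh ⟨s, hs⟩ hsh
    exact ⟨t, t.2, ht⟩
  · obtain ⟨t, ht, htrs⟩ := hh.2 r s r.2 hr s.2 hs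
    exact ⟨⟨t, ht⟩, htrs⟩

theorem conradF_preimage_Ioi_iff {Γ : Set M} (hΓ : Γ ⊆ Set.Ioi 0) :
    ConradF ((↑) ⁻¹' Γ : Set (Set.Ioi (0 : M))) ↔
      ∀ x : M, 0 < x → ∀ S : Set M, (∀ y ∈ S, y ∈ Γ ∧ y ≤ x) →
        (∀ y ∈ S, ∀ z ∈ S, y ≠ z → Disj y z) → S.Finite := by
  constructor
  · intro h x hx S hS hd
    lift S to Set (Set.Ioi (0 : M)) using fun y hy => hΓ (hS y hy).1
    rw [Set.forall_mem_image] at hS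
    refine (h S (fun y hy => (hS hy).1) ⟨⟨x, hx⟩, fun y hy => (hS hy).2⟩ ?_).image _
    exact fun y hy z hz hyz => not_compatible_iff_disj.2 <|
      hd y ⟨y, hy, rfl⟩ z ⟨z, hz, rfl⟩ (Subtype.coe_ne_coe.2 hyz)
  · rintro h S hS ⟨x, hx⟩ hd
    have image_disj : ((↑) '' S : Set M).Pairwise Disj :=
      Set.Pairwise.image (hd.mono' fun _ _ => not_compatible_iff_disj.1)
    refine (h x x.2 ((↑) '' S) ?_ fun y hy z hz => image_disj hy hz).of_finite_image
      Subtype.val_injective.injOn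
    exact Set.forall_mem_image.2 fun y hy => ⟨hS hy, hx hy⟩

theorem conradF_univ_Ioi_iff :
    ConradF (Set.univ : Set (Set.Ioi (0 : M))) ↔
      ∀ x : M, 0 < x → ∀ S : Set M, (∀ y ∈ S, 0 < y ∧ y ≤ x) →
        (∀ y ∈ S, ∀ z ∈ S, y ≠ z → Disj y z) → S.Finite := by
  rw [← Subtype.coe_preimage_self]
  exact conradF_preimage_Ioi_iff subset_rfl

theorem isCoinitial_and_conradF_homogeneous_Ioi_iff :
    IsCoinitial {h : Set.Ioi (0 : M) | Homogeneous h} ∧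
        ConradF {h : Set.Ioi (0 : M) | Homogeneous h} ↔
      (∀ x : M, 0 < x → ∃ h : M, Homog h ∧ h ≤ x) ∧
        ∀ x : M, 0 < x → ∀ S : Set M, (∀ y ∈ S, Homog y ∧ y ≤ x) →
          (∀ y ∈ S, ∀ z ∈ S, y ≠ z → Disj y z) → S.Finite := by
  have homog_pos : {h : M | Homog h} ⊆ Set.Ioi 0 := fun _ hh => hh.1
  simp only [homogeneous_iff_homog]
  exact and_congr (isCoinitial_preimage_coe_iff homog_pos) (conradF_preimage_Ioi_iff homog_pos)

theorem exists_isCoinitial_and_conradF_Ioi_iff :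
    (∃ Γ : Set (Set.Ioi (0 : M)), IsCoinitial Γ ∧ ConradF Γ) ↔
      ∃ Γ : Set M, (∀ g ∈ Γ, 0 < g) ∧ (∀ x : M, 0 < x → ∃ g ∈ Γ, g ≤ x) ∧
        ∀ x : M, 0 < x → ∀ S : Set M, S ⊆ Γ → (∀ y ∈ S, y ≤ x) →
          (∀ y ∈ S, ∀ z ∈ S, y ≠ z → Disj y z) → S.Finite := by
  have exists_preimage (p : Set (Set.Ioi (0 : M)) → Prop) :
      (∃ Γ, p Γ) ↔ ∃ Γ : Set M, Γ ⊆ Set.Ioi 0 ∧ p ((↑) ⁻¹' Γ) := by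
    simp only [← Subtype.exists_set_subtype, Set.preimage_image_eq _ Subtype.val_injective]
  rw [exists_preimage]
  refine exists_congr fun Γ => and_congr_right fun hΓ => ?_
  rw [isCoinitial_preimage_coe_iff hΓ, conradF_preimage_Ioi_iff hΓ]
  simp only [IsCoinitialFor, Set.mem_Ioi, forall_and, and_imp, Set.subset_def]

end StrictlyPositive

theorem stmt_13 {M : Type*} [AddCommMonoid M] [PartialOrder M]
    (hcomp : ∀ a b c : M, a ≤ b → a + c ≤ b + c) (hbot : ∀ x : M, 0 ≤ x)
    (hnt : ∃ x : M, 0 < x) (hpR : PreRiesz M) :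
    ((∀ x : M, 0 < x → ∀ S : Set M, (∀ y ∈ S, 0 < y ∧ y ≤ x) →
        (∀ y ∈ S, ∀ z ∈ S, y ≠ z → Disj y z) → S.Finite) ↔
      ((∀ x : M, 0 < x → ∃ h : M, Homog h ∧ h ≤ x) ∧
        ∀ x : M, 0 < x → ∀ S : Set M, (∀ y ∈ S, Homog y ∧ y ≤ x) →
          (∀ y ∈ S, ∀ z ∈ S, y ≠ z → Disj y z) → S.Finite)) ∧
    (((∀ x : M, 0 < x → ∃ h : M, Homog h ∧ h ≤ x) ∧
        ∀ x : M, 0 < x → ∀ S : Set M, (∀ y ∈ S, Homog y ∧ y ≤ x) →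
          (∀ y ∈ S, ∀ z ∈ S, y ≠ z → Disj y z) → S.Finite) ↔
      (∃ Γ : Set M, (∀ g ∈ Γ, 0 < g) ∧ (∀ x : M, 0 < x → ∃ g ∈ Γ, g ≤ x) ∧
        ∀ x : M, 0 < x → ∀ S : Set M, S ⊆ Γ → (∀ y ∈ S, y ≤ x) →
          (∀ y ∈ S, ∀ z ∈ S, y ≠ z → Disj y z) → S.Finite)) := by
  rw [← conradF_univ_Ioi_iff, ← isCoinitial_and_conradF_homogeneous_Ioi_iff,
    ← exists_isCoinitial_and_conradF_Ioi_iff]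
  exact ⟨(stmt_13_general _).out 0 1, (stmt_13_general _).out 1 2⟩
end

section
/- Let M be a commutative cancellative monoid partially ordered by divisibility (a ≤ b if and only if a + c = b for some c ∈ M). The following are equivalent: (1) every element of M is primal; (2) (2,2)-interpolation: for all a, b, x, y ∈ M with a ≤ x, a ≤ y, b ≤ x, b ≤ y, there exists z with a ≤ z, b ≤ z, z ≤ x, z ≤ y; (3) for all a, b, x₁, …, xₙ ∈ M with a and b below every xᵢ there exists z with a ≤ z, b ≤ z and z ≤ xᵢ for all i; (4) (n,m)-interpolation: for all a₁, …, aₙ, b₁, …, b_m ∈ M with aᵢ ≤ b_j for all i, j, there exists d with aᵢ ≤ d for all i and d ≤ b_j for all j. -/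
/-!
Interpolation between finite families reduces to interpolation between pairs because the
`(2, κ)`-interpolation property says that the common lower bounds of a `κ`-family form a directed
set, and a finite subset of a nonempty directed set is bounded inside it. Order duality then handles
the upper families.

For a pair `a, b ≤ x, y` in a monoid of primal elements, splitting `a` along `a ≤ x = b + q` leaves
only the part `b'` of `b` outside `a` to be covered; splitting `b'` along `y` produces the
interpolant. Conversely, if `x ≤ y₁ + y₂`, an interpolant of `x, y₁ ≤ y₁ + x, y₁ + y₂` has the form
`y₁ + x₂`, where `x₂` is one summand of the required decomposition of `x`.
-/

section Interpolation

variable {α ι κ : Type*}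

/-- The `(ι, κ)`-interpolation property: whenever every member of an `ι`-indexed family lies below
every member of a `κ`-indexed family, some element lies between the two families. The
`(n, m)`-interpolation property is the case `ι = Fin n`, `κ = Fin m`. -/
def HasInterpolation (ι κ α : Type*) [LE α] : Prop :=
  ∀ (a : ι → α) (b : κ → α), (∀ i j, a i ≤ b j) → ∃ c, (∀ i, a i ≤ c) ∧ ∀ j, c ≤ b j

theorem HasInterpolation.dual [LE α] (h : HasInterpolation ι κ α) : HasInterpolation κ ι αᵒᵈ :=
  fun b a hab ↦ (h a b fun i j ↦ hab j i).imp fun _ ↦ And.symm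

theorem hasInterpolation_fin_two_left [LE α] :
    HasInterpolation (Fin 2) κ α ↔ ∀ (a b : α) (x : κ → α), (∀ i, a ≤ x i) → (∀ i, b ≤ x i) →
      ∃ z, a ≤ z ∧ b ≤ z ∧ ∀ i, z ≤ x i := by
  simp only [HasInterpolation, Fin.forall_fin_succ_pi, Fin.forall_fin_zero_pi, Fin.forall_fin_two,
    Fin.cons_zero, Fin.cons_one, and_imp, and_assoc]

theorem hasInterpolation_fin_two_fin_two [LE α] :
    HasInterpolation (Fin 2) (Fin 2) α ↔ ∀ a b x y : α, a ≤ x → a ≤ y → b ≤ x → b ≤ y →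
      ∃ z, a ≤ z ∧ b ≤ z ∧ z ≤ x ∧ z ≤ y := by
  simp only [hasInterpolation_fin_two_left, Fin.forall_fin_succ_pi, Fin.forall_fin_zero_pi,
    Fin.forall_fin_two, Fin.cons_zero, Fin.cons_one, and_imp]

variable [Preorder α]

theorem HasInterpolation.directedOn_lowerBounds_range (h : HasInterpolation (Fin 2) κ α)
    (b : κ → α) : DirectedOn (· ≤ ·) (lowerBounds (Set.range b)) := by
  intro x hx y hy
  obtain ⟨z, hxz, hyz, hzb⟩ := hasInterpolation_fin_two_left.1 h x y b
    (Set.forall_mem_range.1 hx) (Set.forall_mem_range.1 hy)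
  exact ⟨z, Set.forall_mem_range.2 hzb, hxz, hyz⟩

variable [Nonempty α] [Finite ι] [Finite κ]

theorem HasInterpolation.of_fin_two_left [IsCodirectedOrder α]
    (h : HasInterpolation (Fin 2) κ α) : HasInterpolation ι κ α := by
  intro a b hab
  have : Nonempty (lowerBounds (Set.range b)) := (Finite.bddBelow_range b).to_subtype
  obtain ⟨⟨c, hcb⟩, hac⟩ := (h.directedOn_lowerBounds_range b).directed_val.finite_le
    fun i ↦ ⟨a i, Set.forall_mem_range.2 (hab i)⟩
  exact ⟨c, hac, Set.forall_mem_range.1 hcb⟩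

theorem HasInterpolation.of_fin_two_right [IsDirectedOrder α]
    (h : HasInterpolation ι (Fin 2) α) : HasInterpolation ι κ α :=
  h.dual.of_fin_two_left.dual

end Interpolation

section CanonicallyOrdered

variable {M : Type*}

theorem canonicallyOrderedAdd_of_le_iff_exists_add [AddCommMagma M] [LE M]
    (h : ∀ a b : M, a ≤ b ↔ ∃ c, a + c = b) : CanonicallyOrderedAdd M where
  exists_add_of_le {a b} hab := ((h a b).1 hab).imp fun _ ↦ Eq.symm
  le_self_add a b := (h a (a + b)).2 ⟨b, rfl⟩
  le_add_self a b := (h a (b + a)).2 ⟨b, add_comm a b⟩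

theorem addLeftReflectLE_of_canonicallyOrderedAdd [AddSemigroup M] [IsLeftCancelAdd M] [LE M]
    [CanonicallyOrderedAdd M] : AddLeftReflectLE M where
  le_of_add_le_add_left {a b c} h := by
    obtain ⟨d, hd⟩ := exists_add_of_le h
    rw [add_assoc] at hd
    exact le_iff_exists_add.2 ⟨d, add_left_cancel hd⟩

theorem isDirectedOrder_of_canonicallyOrderedAdd [Add M] [LE M] [CanonicallyOrderedAdd M] :
    IsDirectedOrder M where
  directed a b := ⟨a + b, le_self_add, le_add_self⟩

theorem isCodirectedOrder_of_isBotZeroClass [Zero M] [LE M] [IsBotZeroClass M] :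
    IsCodirectedOrder M where
  directed _ _ := ⟨0, zero_le, zero_le⟩

/-- Primality with respect to an additive order, the additive counterpart of `IsPrimal`: an element
below a sum splits into elements below the summands. -/
def IsAddPrimal [Add M] [LE M] (x : M) : Prop :=
  ∀ y₁ y₂ : M, x ≤ y₁ + y₂ → ∃ x₁ x₂ : M, x = x₁ + x₂ ∧ x₁ ≤ y₁ ∧ x₂ ≤ y₂

variable [AddCommSemigroup M] [Preorder M] [CanonicallyOrderedAdd M] [AddLeftReflectLE M]

theorem HasInterpolation.isAddPrimal (h : HasInterpolation (Fin 2) (Fin 2) M) (x : M) :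
    IsAddPrimal x := by
  intro y₁ y₂ hx
  obtain ⟨z, hxz, hyz, hzx, hzy⟩ := hasInterpolation_fin_two_fin_two.1 h x y₁ (y₁ + x) (y₁ + y₂)
    le_add_self hx le_self_add le_self_add
  obtain ⟨x₂, rfl⟩ := exists_add_of_le hyz
  obtain ⟨x₁, rfl⟩ := exists_add_of_le (le_of_add_le_add_left hzx)
  rw [add_comm y₁ x₂] at hxz
  exact ⟨x₁, x₂, add_comm x₂ x₁, le_of_add_le_add_left hxz, le_of_add_le_add_left hzy⟩

theorem hasInterpolation_of_forall_isAddPrimal (h : ∀ x : M, IsAddPrimal x) :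
    HasInterpolation (Fin 2) (Fin 2) M := by
  refine hasInterpolation_fin_two_fin_two.2 fun a b x y hax hay hbx hby ↦ ?_
  obtain ⟨q, rfl⟩ := exists_add_of_le hbx
  obtain ⟨r, rfl⟩ := exists_add_of_le hay
  obtain ⟨a₁, a₂, rfl, ha₁, ha₂⟩ := h a b q hax
  obtain ⟨b', rfl⟩ := exists_add_of_le ha₁
  have hb' : b' ≤ a₂ + r := le_of_add_le_add_left (hby.trans_eq (add_assoc a₁ a₂ r))
  obtain ⟨u, v, rfl, hu, hv⟩ := h b' a₂ r hb'
  refine ⟨a₁ + a₂ + v, le_self_add, ?_, ?_, add_le_add_right hv _⟩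
  · calc a₁ + (u + v) ≤ a₁ + (a₂ + v) := by gcongr
      _ = a₁ + a₂ + v := (add_assoc ..).symm
  · calc a₁ + a₂ + v ≤ a₁ + a₂ + (u + v) := by gcongr; exact le_add_self
      _ = a₁ + (u + v) + a₂ := add_right_comm ..
      _ ≤ a₁ + (u + v) + q := by gcongr

end CanonicallyOrdered

theorem stmt_14_general (M : Type*) [AddCommMonoid M] [Preorder M] [CanonicallyOrderedAdd M]
    [AddLeftReflectLE M] :
    ((∀ x : M, IsAddPrimal x) ↔ HasInterpolation (Fin 2) (Fin 2) M) ∧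
    (HasInterpolation (Fin 2) (Fin 2) M ↔ ∀ n, HasInterpolation (Fin 2) (Fin n) M) ∧
    ((∀ n, HasInterpolation (Fin 2) (Fin n) M) ↔ ∀ n m, HasInterpolation (Fin n) (Fin m) M) := by
  have := isDirectedOrder_of_canonicallyOrderedAdd (M := M)
  have := isCodirectedOrder_of_isBotZeroClass (M := M)
  exact ⟨⟨hasInterpolation_of_forall_isAddPrimal, HasInterpolation.isAddPrimal⟩,
    ⟨fun h _ ↦ h.of_fin_two_right, fun h ↦ h 2⟩,
    ⟨fun h _ m ↦ (h m).of_fin_two_left, fun h ↦ h 2⟩⟩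

theorem stmt_14 {M : Type*} [AddCommMonoid M] [PartialOrder M]
    (hdvd : ∀ a b : M, a ≤ b ↔ ∃ c : M, a + c = b)
    (hcancel : ∀ a b c : M, a + b = a + c → b = c) :
    -- (1) every element is primal
    ((∀ x y₁ y₂ : M, x ≤ y₁ + y₂ →
        ∃ x₁ x₂ : M, x = x₁ + x₂ ∧ x₁ ≤ y₁ ∧ x₂ ≤ y₂) ↔
      -- (2) (2,2)-interpolation
      (∀ a b x y : M, a ≤ x → a ≤ y → b ≤ x → b ≤ y →
        ∃ z : M, a ≤ z ∧ b ≤ z ∧ z ≤ x ∧ z ≤ y)) ∧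
    ((∀ a b x y : M, a ≤ x → a ≤ y → b ≤ x → b ≤ y →
        ∃ z : M, a ≤ z ∧ b ≤ z ∧ z ≤ x ∧ z ≤ y) ↔
      -- (3) (2,n)-interpolation
      (∀ (n : ℕ) (a b : M) (x : Fin n → M), (∀ i, a ≤ x i) → (∀ i, b ≤ x i) →
        ∃ z : M, a ≤ z ∧ b ≤ z ∧ ∀ i, z ≤ x i)) ∧
    ((∀ (n : ℕ) (a b : M) (x : Fin n → M), (∀ i, a ≤ x i) → (∀ i, b ≤ x i) →
        ∃ z : M, a ≤ z ∧ b ≤ z ∧ ∀ i, z ≤ x i) ↔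
      -- (4) (n,m)-interpolation
      (∀ (n m : ℕ) (a : Fin n → M) (b : Fin m → M), (∀ i j, a i ≤ b j) →
        ∃ d : M, (∀ i, a i ≤ d) ∧ ∀ j, d ≤ b j)) := by
  have := canonicallyOrderedAdd_of_le_iff_exists_add hdvd
  have : IsLeftCancelAdd M := ⟨hcancel⟩
  have := addLeftReflectLE_of_canonicallyOrderedAdd (M := M)
  simp only [← hasInterpolation_fin_two_fin_two, ← hasInterpolation_fin_two_left]
  exact stmt_14_general M
end
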